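/- Let m and F be positive integers with m not dividing F. Then: (1) if F = m − 1 then {g(S) : S ∈ 𝓡(F,m)} = {m−1}; (2) if m < F < 2m then {g(S) : S ∈ 𝓡(F,m)} = {m, m+1, …, F−1}; (3) if F > 2m then {g(S) : S ∈ 𝓡(F,m)} = {⌈(F+1)/2⌉, ⌈(F+1)/2⌉+1, …, F − ⌊F/m⌋}. -/

import Mathlib

/-!
A member of `RFm F m` is an additive submonoid of `ℕ` which contains `m` and everything above `F`,
but neither `F` nor any positive integer below `m` (`mem_RFm_iff`). The genera of these submonoids
form an interval, and the proof computes its end points.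

*Upper bound.* Every member contains all multiples of `m`, so its gaps are among the `F - F / m`
non-multiples of `m` in `(0, F]`.

*No holes.* Given a member `S`, put `S_t = ⟨m⟩ ∪ {x ∈ S | t ≤ x}` (`trunc`). For `t ≤ F + 1` it is
again a member; `S_0 = S`, `S_{F+1}` has the maximal genus `F - F / m`, and passing from `t` to
`t + 1` creates at most one new gap. By a discrete intermediate value argument all genera between
`genus S` and `F - F / m` occur (`exists_genus_eq`, `genera_eq_Icc`).

*Minimum.* It remains to find the least genus in each case.
If `F < 2m`, then `1, …, m - 1` and `F` (which is `m - 1` when `F < m`) are gaps, and the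
semigroup `{0} ∪ [m, ∞) \ {F}` has no others.
If `F > 2m`, then `x ∈ S` forces `F - x ∉ S`, so at least half of `[0, F]` consists of gaps.
Equality up to rounding holds for the semigroup
`⟨m⟩ ∪ {x | 2x > F, x ∉ F - ⟨m⟩}` (`minSgp`): it contains one of `x`, `F - x` whenever `2x ≠ F`.
-/

/-- A numerical semigroup: a submonoid of (ℕ,+) with finite complement. -/
def IsNumericalSemigroup (S : Set ℕ) : Prop :=
  0 ∈ S ∧ (∀ a ∈ S, ∀ b ∈ S, a + b ∈ S) ∧ Sᶜ.Finite

/-- The multiplicity m(S): least positive element of S. -/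
noncomputable def mult (S : Set ℕ) : ℕ := sInf {s | s ∈ S ∧ s ≠ 0}

/-- The ratio r(S): least s ∈ S not divisible by the multiplicity. -/
noncomputable def ratio (S : Set ℕ) : ℕ := sInf {s | s ∈ S ∧ ¬ mult S ∣ s}

/-- The Frobenius number F(S): largest integer not in S. -/
noncomputable def frob (S : Set ℕ) : ℕ := sSup Sᶜ

/-- The genus g(S): number of gaps of S. -/
noncomputable def genus (S : Set ℕ) : ℕ := Sᶜ.ncard

/-- Pseudo-Frobenius numbers of S. -/
def PF (S : Set ℕ) : Set ℕ := {x | x ∉ S ∧ ∀ s ∈ S, s ≠ 0 → x + s ∈ S}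

/-- Special gaps of S. -/
def SG (S : Set ℕ) : Set ℕ := {x | x ∈ PF S ∧ 2 * x ∈ S}

/-- The Apéry set of n in S: elements s of S with s - n ∉ S (as integers). -/
def Ap (S : Set ℕ) (n : ℕ) : Set ℕ := {s | s ∈ S ∧ ¬ ∃ t ∈ S, t + n = s}

/-- The minimal system of generators of a numerical semigroup:
    nonzero elements not expressible as a sum of two nonzero elements. -/
def msg (S : Set ℕ) : Set ℕ :=
  {x | x ∈ S ∧ x ≠ 0 ∧ ∀ a ∈ S, ∀ b ∈ S, a ≠ 0 → b ≠ 0 → x ≠ a + b}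

/-- The embedding dimension e(S). -/
noncomputable def edim (S : Set ℕ) : ℕ := (msg S).ncard

/-- The submonoid of ℕ generated by a set A. -/
def closureSet (A : Set ℕ) : Set ℕ := (AddSubmonoid.closure A : Set ℕ)

/-- M is the minimum of the family R with respect to inclusion. -/
def IsMinOf (R : Set (Set ℕ)) (M : Set ℕ) : Prop := M ∈ R ∧ ∀ S ∈ R, M ⊆ S

/-- A ratio-covariety. -/
def IsRatioCovariety (R : Set (Set ℕ)) : Prop :=
  R.Nonempty ∧ (∀ S ∈ R, IsNumericalSemigroup S) ∧
  (∃ M, IsMinOf R M) ∧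
  (∀ S ∈ R, ∀ T ∈ R, S ∩ T ∈ R) ∧
  (∀ S ∈ R, ∀ M, IsMinOf R M → S ≠ M → S \ {ratio S} ∈ R)

/-- The family 𝓡(F,m) of numerical semigroups with Frobenius number F and multiplicity m. -/
def RFm (F m : ℕ) : Set (Set ℕ) :=
  {S | IsNumericalSemigroup S ∧ frob S = F ∧ mult S = m}

/-- Δ(F,m) = ⟨m⟩ ∪ {F+1, →}. -/
def Delta (F m : ℕ) : Set ℕ := {n | m ∣ n} ∪ {n | F < n}

/-- X is an 𝓡-set: disjoint from min(𝓡) and contained in some element of 𝓡. -/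
def IsRSet (R : Set (Set ℕ)) (X : Set ℕ) : Prop :=
  (∀ M, IsMinOf R M → X ∩ M = ∅) ∧ ∃ S ∈ R, X ⊆ S

/-- 𝓡[X]: the intersection of all elements of 𝓡 containing X. -/
def RGen (R : Set (Set ℕ)) (X : Set ℕ) : Set ℕ := ⋂₀ {S | S ∈ R ∧ X ⊆ S}

/-- The 𝓡-rank of S. -/
noncomputable def Rrank (R : Set (Set ℕ)) (S : Set ℕ) : ℕ :=
  sInf {n | ∃ X, IsRSet R X ∧ RGen R X = S ∧ X.ncard = n}

/-- For positive `m`, membership in `RFm F m` without suprema and infima. The conjunct `F ∉ S` on the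
left follows from membership when `0 < F`, see `frob_notMem`. -/
theorem mem_RFm_iff {F m : ℕ} (hm : 0 < m) (S : Set ℕ) :
    S ∈ RFm F m ∧ F ∉ S ↔ 0 ∈ S ∧ (∀ a ∈ S, ∀ b ∈ S, a + b ∈ S) ∧ (∀ x, F < x → x ∈ S) ∧ F ∉ S ∧
      m ∈ S ∧ ∀ x, 0 < x → x < m → x ∉ S := by
  constructor
  · rintro ⟨⟨⟨h0, hadd, hfin⟩, hf, hmu⟩, hFS⟩
    have hmin : m ∈ {s | s ∈ S ∧ s ≠ 0} := by
      rw [← hmu]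
      apply Nat.sInf_mem
      rw [mult] at hmu
      exact Nat.nonempty_of_pos_sInf (hmu ▸ hm)
    refine ⟨h0, hadd, fun x hx => ?_, hFS, hmin.1, fun x hx0 hxm hxS => ?_⟩
    · by_contra hxS
      have := le_csSup hfin.bddAbove (show x ∈ Sᶜ from hxS)
      rw [frob] at hf
      omega
    · have : sInf {s | s ∈ S ∧ s ≠ 0} ≤ x := Nat.sInf_le ⟨hxS, hx0.ne'⟩
      rw [mult] at hmu
      omega
  · rintro ⟨h0, hadd, hbig, hFS, hmS, hsmall⟩
    refine ⟨⟨⟨h0, hadd, ?_⟩, ?_, ?_⟩, hFS⟩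
    · refine (Set.finite_Iic F).subset fun x hx => ?_
      by_contra h
      exact hx (hbig x (not_le.1 h))
    · refine IsGreatest.csSup_eq ⟨hFS, fun x hx => ?_⟩
      by_contra h
      exact hx (hbig x (not_le.1 h))
    · refine IsLeast.csInf_eq ⟨⟨hmS, hm.ne'⟩, fun x hx => ?_⟩
      by_contra h
      exact hsmall x (Nat.pos_of_ne_zero hx.2) (not_le.1 h) hx.1

/-- The Frobenius number is a gap. Positivity of `F` matters: `frob Set.univ = sSup ∅ = 0`. -/
theorem frob_notMem {F m : ℕ} (hF : 0 < F) {S : Set ℕ} (hS : S ∈ RFm F m) : F ∉ S := by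
  obtain ⟨⟨_, _, hfin⟩, hf, _⟩ := hS
  have hne : (Sᶜ).Nonempty := by
    by_contra h
    rw [Set.not_nonempty_iff_eq_empty] at h
    rw [frob, h, csSup_empty] at hf
    exact hF.ne hf
  have := Nat.sSup_mem hne hfin.bddAbove
  rw [frob] at hf
  rwa [hf] at this

open Classical in
/-- The genus as the cardinality of a filtered interval. -/
theorem genus_eq {F : ℕ} {S : Set ℕ} (h0 : 0 ∈ S) (hbig : ∀ x, F < x → x ∈ S) :
    genus S = ((Finset.Ioc 0 F).filter (· ∉ S)).card := by
  rw [genus, ← Set.ncard_coe_finset]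
  congr 1
  ext x
  simp only [Set.mem_compl_iff, Finset.coe_filter, Finset.mem_Ioc, Set.mem_ofPred_eq]
  refine ⟨fun hx => ⟨⟨Nat.pos_of_ne_zero fun h => hx (h ▸ h0), ?_⟩, hx⟩, fun h => h.2⟩
  by_contra h
  exact hx (hbig x (not_le.1 h))

theorem dvd_mem {m : ℕ} {S : Set ℕ} (h0 : 0 ∈ S) (hadd : ∀ a ∈ S, ∀ b ∈ S, a + b ∈ S)
    (hmS : m ∈ S) {x : ℕ} (hx : m ∣ x) : x ∈ S := by
  obtain ⟨k, rfl⟩ := hx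
  induction k with
  | zero => exact h0
  | succ k ih => exact hadd _ ih _ hmS

theorem card_not_dvd (F m : ℕ) : ((Finset.Ioc 0 F).filter (¬ m ∣ ·)).card = F - F / m := by
  have h := Finset.card_filter_add_card_filter_not (s := Finset.Ioc 0 F) (fun x => m ∣ x)
  rw [Nat.Ioc_filter_dvd_card_eq_div, Nat.card_Ioc] at h
  omega

theorem genus_le {F m : ℕ} (hm : 0 < m) (hF : 0 < F) {S : Set ℕ} (hS : S ∈ RFm F m) :
    genus S ≤ F - F / m := by
  classical
  obtain ⟨h0, hadd, hbig, -, hmS, -⟩ := (mem_RFm_iff hm S).1 ⟨hS, frob_notMem hF hS⟩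
  rw [genus_eq h0 hbig, ← card_not_dvd]
  refine Finset.card_le_card fun x => ?_
  simp only [Finset.mem_filter]
  exact fun h => ⟨h.1, fun hd => h.2 (dvd_mem h0 hadd hmS hd)⟩

/-- `⟨m⟩ ∪ {x ∈ S | t ≤ x}`: the set `S` with its non-multiples of `m` below `t` removed. -/
def trunc (m : ℕ) (S : Set ℕ) (t : ℕ) : Set ℕ := {x | m ∣ x ∨ (t ≤ x ∧ x ∈ S)}

theorem trunc_mem {F m : ℕ} (hm : 0 < m) (hF : 0 < F) (hdvd : ¬ m ∣ F) {S : Set ℕ}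
    (hS : S ∈ RFm F m) {t : ℕ} (ht : t ≤ F + 1) : trunc m S t ∈ RFm F m := by
  obtain ⟨h0, hadd, hbig, hFS, hmS, hsmall⟩ := (mem_RFm_iff hm S).1 ⟨hS, frob_notMem hF hS⟩
  refine ((mem_RFm_iff hm _).2 ⟨Or.inl (dvd_zero m), ?_, ?_, ?_, Or.inl dvd_rfl, ?_⟩).1
  · rintro a (ha | ⟨ha, ha'⟩) b (hb | ⟨hb, hb'⟩)
    · exact Or.inl (dvd_add ha hb)
    · exact Or.inr ⟨by omega, hadd _ (dvd_mem h0 hadd hmS ha) _ hb'⟩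
    · exact Or.inr ⟨by omega, hadd _ ha' _ (dvd_mem h0 hadd hmS hb)⟩
    · exact Or.inr ⟨by omega, hadd _ ha' _ hb'⟩
  · exact fun x hx => Or.inr ⟨by omega, hbig x hx⟩
  · rintro (h | h)
    exacts [hdvd h, hFS h.2]
  · rintro x hx hxm (h | h)
    exacts [Nat.not_dvd_of_pos_of_lt hx hxm h, hsmall x hx hxm h.2]

theorem genus_trunc_succ_le {F m : ℕ} (hm : 0 < m) (hF : 0 < F) (hdvd : ¬ m ∣ F) {S : Set ℕ}
    (hS : S ∈ RFm F m) {t : ℕ} (ht : t ≤ F + 1) :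
    genus (trunc m S (t + 1)) ≤ genus (trunc m S t) + 1 := by
  have hfin := (trunc_mem hm hF hdvd hS ht).1.2.2
  refine (Set.ncard_le_ncard (t := insert t (trunc m S t)ᶜ) ?_ (hfin.insert t)).trans
    (Set.ncard_insert_le _ _)
  intro x hx
  simp only [trunc, Set.mem_compl_iff, Set.mem_ofPred_eq, Set.mem_insert_iff, not_or] at hx ⊢
  by_cases hxt : x = t
  · exact Or.inl hxt
  · exact Or.inr ⟨hx.1, fun h => hx.2 ⟨by omega, h.2⟩⟩

/-- All genera between that of a given member of `RFm F m` and the maximal one are attained. -/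
theorem exists_genus_eq {F m : ℕ} (hm : 0 < m) (hF : 0 < F) (hdvd : ¬ m ∣ F) {S : Set ℕ}
    (hS : S ∈ RFm F m) {g : ℕ} (h1 : genus S ≤ g) (h2 : g ≤ F - F / m) :
    ∃ T ∈ RFm F m, genus T = g := by
  classical
  have key : ∀ t ≤ F + 1, g ≤ genus (trunc m S t) → ∃ T ∈ RFm F m, genus T = g := by
    intro t
    induction t with
    | zero =>
      intro _ hg
      obtain ⟨h0, hadd, -, -, hmS, -⟩ := (mem_RFm_iff hm S).1 ⟨hS, frob_notMem hF hS⟩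
      have : trunc m S 0 = S := by
        ext x
        exact ⟨fun h => h.elim (dvd_mem h0 hadd hmS) And.right, fun h => Or.inr ⟨Nat.zero_le _, h⟩⟩
      rw [this] at hg
      exact ⟨S, hS, le_antisymm h1 hg⟩
    | succ t ih =>
      intro ht hg
      by_cases hgt : g ≤ genus (trunc m S t)
      · exact ih (by omega) hgt
      · have := genus_trunc_succ_le hm hF hdvd hS (t := t) (by omega)
        exact ⟨_, trunc_mem hm hF hdvd hS ht, by omega⟩
  refine key (F + 1) le_rfl (h2.trans ?_)
  have hT := trunc_mem hm hF hdvd hS (t := F + 1) le_rfl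
  obtain ⟨h0, -, hbig, -⟩ := (mem_RFm_iff hm _).1 ⟨hT, frob_notMem hF hT⟩
  rw [genus_eq h0 hbig, ← card_not_dvd]
  refine Finset.card_le_card fun x => ?_
  simp only [Finset.mem_filter, Finset.mem_Ioc, trunc, Set.mem_ofPred_eq, not_or]
  exact fun h => ⟨h.1, h.2, fun h' => by omega⟩

/-- Once a member of `RFm F m` attains a lower bound `b` of the genera, the genera form the
interval from `b` to `F - F / m`. -/
theorem genera_eq_Icc {F m b : ℕ} (hm : 0 < m) (hF : 0 < F) (hdvd : ¬ m ∣ F)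
    (hlow : ∀ S ∈ RFm F m, b ≤ genus S) (hex : ∃ S ∈ RFm F m, genus S ≤ b) :
    {g | ∃ S ∈ RFm F m, genus S = g} = Set.Icc b (F - F / m) := by
  obtain ⟨S, hS, hSb⟩ := hex
  ext g
  constructor
  · rintro ⟨T, hT, rfl⟩
    exact ⟨hlow T hT, genus_le hm hF hT⟩
  · exact fun h => exists_genus_eq hm hF hdvd hS (hSb.trans h.1) h.2

theorem half_le_genus {F m : ℕ} (hm : 0 < m) (hF : 0 < F) {S : Set ℕ} (hS : S ∈ RFm F m) :
    (F + 2) / 2 ≤ genus S := by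
  classical
  obtain ⟨h0, hadd, hbig, hFS, -, -⟩ := (mem_RFm_iff hm S).1 ⟨hS, frob_notMem hF hS⟩
  -- `x ↦ F - x` embeds the elements of `S` in `(0, F]` into the gaps other than `F`.
  have hle : ((Finset.Ioc 0 F).filter (· ∈ S)).card ≤
      (((Finset.Ioc 0 F).filter (· ∉ S)).erase F).card := by
    refine Finset.card_le_card_of_injOn (fun x => F - x) ?_ ?_
    · intro x hx
      simp only [Finset.coe_filter, Finset.mem_Ioc, Set.mem_ofPred_eq] at hx
      have hne : x ≠ F := fun h => hFS (h ▸ hx.2)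
      simp only [Finset.coe_erase, Finset.coe_filter, Finset.mem_Ioc, Set.mem_sdiff,
        Set.mem_ofPred_eq, Set.mem_singleton_iff]
      refine ⟨⟨by omega, fun h => hFS ?_⟩, by omega⟩
      have := hadd _ hx.2 _ h
      rwa [Nat.add_sub_cancel' hx.1.2] at this
    · intro x hx y hy hxy
      simp only [Finset.coe_filter, Finset.mem_Ioc, Set.mem_ofPred_eq] at hx hy hxy
      omega
  have hFm : F ∈ (Finset.Ioc 0 F).filter (· ∉ S) := by simp [hF, hFS]
  have hpos := Finset.card_pos.2 ⟨F, hFm⟩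
  rw [Finset.card_erase_of_mem hFm] at hle
  have hsum := Finset.card_filter_add_card_filter_not (s := Finset.Ioc 0 F) (fun x => x ∈ S)
  rw [Nat.card_Ioc] at hsum
  rw [genus_eq h0 hbig]
  omega

/-- `⟨m⟩ ∪ {x | 2x > F, x ∉ F - ⟨m⟩}`, the member of `RFm F m` of least genus when `F > 2m`. -/
def minSgp (F m : ℕ) : Set ℕ := {x | m ∣ x ∨ (F < 2 * x ∧ ∀ k, x + m * k ≠ F)}

theorem minSgp_mem {F m : ℕ} (hm : 0 < m) (hdvd : ¬ m ∣ F) (h : 2 * m < F) :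
    minSgp F m ∈ RFm F m := by
  refine ((mem_RFm_iff hm _).2 ⟨Or.inl (dvd_zero m), ?_, ?_, ?_, Or.inl dvd_rfl, ?_⟩).1
  · rintro a (⟨c, rfl⟩ | ⟨ha, ha'⟩) b (⟨d, rfl⟩ | ⟨hb, hb'⟩)
    · exact Or.inl ⟨c + d, by ring⟩
    · exact Or.inr ⟨by omega, fun k hk => hb' (c + k) (by rw [← hk]; ring)⟩
    · exact Or.inr ⟨by omega, fun k hk => ha' (d + k) (by rw [← hk]; ring)⟩
    · exact Or.inr ⟨by omega, fun k hk => by omega⟩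
  · exact fun x hx => Or.inr ⟨by omega, fun k hk => by omega⟩
  · rintro (h | h)
    exacts [hdvd h, h.2 0 (by simp)]
  · rintro x hx hxm (h | h)
    · exact Nat.not_dvd_of_pos_of_lt hx hxm h
    · omega

theorem genus_minSgp_le {F m : ℕ} (hm : 0 < m) (hF : 0 < F) (hdvd : ¬ m ∣ F) (h : 2 * m < F) :
    genus (minSgp F m) ≤ (F + 2) / 2 := by
  classical
  have hS := minSgp_mem hm hdvd h
  obtain ⟨h0, hadd, hbig, hFS, -, -⟩ := (mem_RFm_iff hm _).1 ⟨hS, frob_notMem hF hS⟩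
  -- `x ↦ F - x` embeds the gaps other than `F` and `F / 2` into the elements in `(0, F]`.
  have hle : ((((Finset.Ioc 0 F).filter (· ∉ minSgp F m)).erase F).erase (F / 2)).card ≤
      ((Finset.Ioc 0 F).filter (· ∈ minSgp F m)).card := by
    refine Finset.card_le_card_of_injOn (fun x => F - x) ?_ ?_
    · intro x hx
      simp only [Finset.coe_erase, Finset.coe_filter, Finset.mem_Ioc, Set.mem_sdiff,
        Set.mem_ofPred_eq, Set.mem_singleton_iff] at hx
      obtain ⟨⟨⟨hx1, hxS⟩, hxF⟩, hx2⟩ := hx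
      simp only [Finset.coe_filter, Finset.mem_Ioc, Set.mem_ofPred_eq]
      refine ⟨by omega, ?_⟩
      simp only [minSgp, Set.mem_ofPred_eq, not_or, not_and] at hxS ⊢
      by_cases hk : ∃ k, x + m * k = F
      · obtain ⟨k, hk⟩ := hk
        exact Or.inl ⟨k, by omega⟩
      · push Not at hk
        have : ¬ F < 2 * x := fun hlt => hxS.2 hlt hk
        refine Or.inr ⟨by omega, fun k hk' => hxS.1 ⟨k, by omega⟩⟩
    · intro x hx y hy hxy
      simp only [Finset.coe_erase, Finset.coe_filter, Finset.mem_Ioc, Set.mem_sdiff,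
        Set.mem_ofPred_eq, Set.mem_singleton_iff] at hx hy hxy
      omega
  have h1 := Finset.pred_card_le_card_erase (s := (Finset.Ioc 0 F).filter (· ∉ minSgp F m)) (a := F)
  have h2 := Finset.pred_card_le_card_erase
    (s := ((Finset.Ioc 0 F).filter (· ∉ minSgp F m)).erase F) (a := F / 2)
  have hsum := Finset.card_filter_add_card_filter_not (s := Finset.Ioc 0 F)
    (fun x => x ∈ minSgp F m)
  rw [Nat.card_Ioc] at hsum
  rw [genus_eq h0 hbig]
  omega

theorem pred_le_genus {F m : ℕ} (hm : 0 < m) (hF : 0 < F) {S : Set ℕ} (hS : S ∈ RFm F m) :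
    m - 1 ≤ genus S := by
  obtain ⟨-, -, -, -, -, hsmall⟩ := (mem_RFm_iff hm S).1 ⟨hS, frob_notMem hF hS⟩
  have : ((Finset.Ioo 0 m : Finset ℕ) : Set ℕ).ncard ≤ genus S := by
    refine Set.ncard_le_ncard (fun x hx => ?_) hS.1.2.2
    simp only [Finset.coe_Ioo, Set.mem_Ioo] at hx
    exact hsmall x hx.1 hx.2
  rwa [Set.ncard_coe_finset, Nat.card_Ioo] at this

theorem le_genus {F m : ℕ} (hm : 0 < m) (h : m < F) {S : Set ℕ} (hS : S ∈ RFm F m) :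
    m ≤ genus S := by
  have hFS := frob_notMem (by omega) hS
  obtain ⟨-, -, -, -, -, hsmall⟩ := (mem_RFm_iff hm S).1 ⟨hS, hFS⟩
  have : ((insert F (Finset.Ioo 0 m) : Finset ℕ) : Set ℕ).ncard ≤ genus S := by
    refine Set.ncard_le_ncard (fun x hx => ?_) hS.1.2.2
    simp only [Finset.coe_insert, Finset.coe_Ioo, Set.mem_insert_iff, Set.mem_Ioo] at hx
    obtain rfl | hx := hx
    exacts [hFS, hsmall x hx.1 hx.2]
  rw [Set.ncard_coe_finset, Finset.card_insert_of_notMem (by simp; omega), Nat.card_Ioo] at this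
  omega

/-- For `F < 2m` the semigroup `{0} ∪ [m, ∞) \ {F}` belongs to `RFm F m`, provided `m - 1 ≤ F`
and `F ≠ m`. -/
theorem ordinary_mem {F m : ℕ} (hm : 0 < m) (hF : 0 < F) (h : F < 2 * m) (hne : F ≠ m)
    (hle : m - 1 ≤ F) : {x | x = 0 ∨ (m ≤ x ∧ x ≠ F)} ∈ RFm F m := by
  refine ((mem_RFm_iff hm _).2 ?_).1
  simp only [Set.mem_ofPred_eq]
  refine ⟨Or.inl trivial, ?_, ?_, ?_, ?_, ?_⟩
  · intro a ha b hb
    omega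
  · intros; omega
  · rintro (h | h)
    exacts [hF.ne' h, h.2 rfl]
  · omega
  · intros; omega

theorem genus_ordinary_le (F m : ℕ) :
    genus {x | x = 0 ∨ (m ≤ x ∧ x ≠ F)} ≤ (insert F (Finset.Ioo 0 m)).card := by
  rw [← Set.ncard_coe_finset]
  refine Set.ncard_le_ncard (fun x hx => ?_) (Finset.finite_toSet _)
  simp only [Set.mem_compl_iff, Set.mem_ofPred_eq] at hx
  simp only [Finset.coe_insert, Finset.coe_Ioo, Set.mem_insert_iff, Set.mem_Ioo]
  omega

theorem genus_range_of_RFm (m F : ℕ) (hm : 0 < m) (hF : 0 < F) (hdvd : ¬ m ∣ F) :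
    (F = m - 1 → {g | ∃ S ∈ RFm F m, genus S = g} = {m - 1}) ∧
    (m < F ∧ F < 2 * m → {g | ∃ S ∈ RFm F m, genus S = g} = Set.Icc m (F - 1)) ∧
    (2 * m < F →
      {g | ∃ S ∈ RFm F m, genus S = g} = Set.Icc ((F + 2) / 2) (F - F / m)) := by
  refine ⟨fun h => ?_, fun h => ?_, fun h => ?_⟩
  · rw [genera_eq_Icc hm hF hdvd (fun S hS => pred_le_genus hm hF hS)
      ⟨_, ordinary_mem hm hF (by omega) (by omega) (by omega), (genus_ordinary_le F m).trans ?_⟩,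
      Nat.div_eq_of_lt (by omega), ← h, Nat.sub_zero, Set.Icc_self]
    rw [Finset.insert_eq_of_mem (by simp; omega), Nat.card_Ioo]
    omega
  · have hdiv : F / m = 1 := Nat.div_eq_of_lt_le (by omega) (by omega)
    rw [genera_eq_Icc hm hF hdvd (fun S hS => le_genus hm h.1 hS)
      ⟨_, ordinary_mem hm hF h.2 (by omega) (by omega), (genus_ordinary_le F m).trans ?_⟩, hdiv]
    refine (Finset.card_insert_le _ _).trans ?_
    rw [Nat.card_Ioo]
    omega
  · exact genera_eq_Icc hm hF hdvd (fun S hS => half_le_genus hm hF hS)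
      ⟨_, minSgp_mem hm hdvd h, genus_minSgp_le hm hF hdvd h⟩
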